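/- For every f ∈ L¹(ℝ,ℂ) with ∫_ℝ f(x) dx = 0 and every ε > 0 there exists g ∈ L¹(ℝ,ℂ) with ‖f − g‖_{L¹} < ε such that the Fourier transform ĝ is a smooth function with compact support and dist(supp ĝ, {0}) > 0 (i.e. ĝ vanishes on a neighborhood of 0). In other words, {g ∈ L¹(ℝ,ℂ) : ĝ ∈ C_c^∞(ℝ), 0 ∉ supp ĝ} is dense in {f ∈ L¹(ℝ,ℂ) : ∫_ℝ f = 0} for the L¹ norm. -/

import Mathlib

/-!
Write `K_s(x) = s K(s x)`, where `K` is a Schwartz function whose Fourier transform is smooth,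
compactly supported and equal to `1` on `[-1, 1]`. After replacing `f` by an `L¹`-close Schwartz
function `h`, the approximant is `g = K_N * h - h * K_t` with `N` large and `t` small. Its Fourier
transform `ĥ(ξ) (K̂(ξ/N) - K̂(ξ/t))` is smooth and compactly supported, and it vanishes near `0`
because both cut-offs equal `1` there.

Both convolutions are controlled by one estimate (`integral_conv_sub_le`),
`‖a * b - (∫ a) b‖₁ ≤ (∫ |y| |a(y)| dy) ‖b'‖₁`.
For `a = K_N`, `b = h` the right side is `O(1/N)`, and `∫ K_N = 1`, so `K_N * h` is close to `h`.
For `a = h`, `b = K_t` it is `O(t)`, so `h * K_t` is close to `(∫ h) K_t`, whose norm is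
`|∫ h| ‖K‖₁`; this is small since `∫ f = 0` and `h` is close to `f`.
-/

open MeasureTheory Complex

/-- The Fourier transform of an integrable function `f : ℝ → ℂ`:
`f̂(ξ) = ∫ f(x) e^{-iξx} dx`. -/
noncomputable def FT (f : ℝ → ℂ) (ξ : ℝ) : ℂ :=
  ∫ x : ℝ, f x * Complex.exp (-Complex.I * ξ * x)

open scoped SchwartzMap FourierTransform ENNReal Convolution

/-- The `L¹` modulus of continuity of `b` is at most `|y| ‖b'‖₁`: write `b (x - y) - b x` as the
integral of `b'` along the segment and exchange the integrals. -/
theorem lintegral_translate_sub_le (b : 𝓢(ℝ, ℂ)) (y : ℝ) :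
    ∫⁻ x, ‖b (x - y) - b x‖ₑ ≤ ‖y‖ₑ * ∫⁻ x, ‖deriv b x‖ₑ := by
  have hb' : Continuous (deriv b) := (SchwartzMap.derivCLM ℝ ℂ b).continuous
  have h1 : ∀ x, ‖b (x - y) - b x‖ₑ ≤
      ∫⁻ s in Set.Ioc (0 : ℝ) 1, ‖y‖ₑ * ‖deriv b (x - s * y)‖ₑ := by
    intro x
    have hd : ∀ s ∈ Set.uIcc (0 : ℝ) 1,
        HasDerivAt (fun s : ℝ ↦ b (x - s * y)) ((-y) • deriv b (x - s * y)) s := by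
      intro s _
      have h2 : HasDerivAt (fun s : ℝ ↦ x - s * y) (-y) s := by
        simpa using ((hasDerivAt_id s).mul_const y).const_sub x
      exact (b.hasDerivAt (x - s * y)).scomp s h2
    have h3 := intervalIntegral.integral_eq_sub_of_hasDerivAt hd
      (Continuous.intervalIntegrable (by fun_prop) _ _)
    simp only [one_mul, zero_mul, sub_zero] at h3
    rw [← h3, intervalIntegral.integral_of_le zero_le_one]
    refine (enorm_integral_le_lintegral_enorm _).trans_eq ?_
    simp only [enorm_smul, enorm_neg]
  calc ∫⁻ x, ‖b (x - y) - b x‖ₑ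
      ≤ ∫⁻ x, ∫⁻ s in Set.Ioc (0 : ℝ) 1, ‖y‖ₑ * ‖deriv b (x - s * y)‖ₑ := lintegral_mono h1
    _ = ∫⁻ s in Set.Ioc (0 : ℝ) 1, ∫⁻ x, ‖y‖ₑ * ‖deriv b (x - s * y)‖ₑ := by
        refine lintegral_lintegral_swap (Measurable.aemeasurable ?_)
        have : Continuous fun p : ℝ × ℝ ↦ deriv b (p.1 - p.2 * y) := by fun_prop
        exact this.measurable.enorm.const_mul _
    _ = ‖y‖ₑ * ∫⁻ x, ‖deriv b x‖ₑ := by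
        have : ∀ s : ℝ, ∫⁻ x, ‖y‖ₑ * ‖deriv b (x - s * y)‖ₑ = ‖y‖ₑ * ∫⁻ x, ‖deriv b x‖ₑ := by
          intro s
          rw [lintegral_const_mul _ (by fun_prop),
            lintegral_sub_right_eq_self (fun x ↦ ‖deriv b x‖ₑ) (s * y)]
        simp [this]

/-- The convolution of two Schwartz functions, as a Schwartz function. -/
noncomputable def conv (a b : 𝓢(ℝ, ℂ)) : 𝓢(ℝ, ℂ) :=
  SchwartzMap.convolution (ContinuousLinearMap.mul ℂ ℂ) a b

theorem conv_apply (a b : 𝓢(ℝ, ℂ)) (x : ℝ) : conv a b x = ∫ y, a y * b (x - y) := by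
  rw [conv, SchwartzMap.convolution_apply]
  rfl

theorem fourier_conv (a b : 𝓢(ℝ, ℂ)) (ξ : ℝ) : 𝓕 (conv a b) ξ = 𝓕 a ξ * 𝓕 b ξ := by
  rw [conv, SchwartzMap.fourier_convolution]
  rfl

theorem integrable_mul_translate (a b : 𝓢(ℝ, ℂ)) (x : ℝ) :
    Integrable fun y ↦ a y * b (x - y) := by
  obtain ⟨C, hC⟩ := b.decay 0 0
  refine a.integrable.mul_bdd (c := C) (by fun_prop) (.of_forall fun y ↦ ?_)
  simpa using hC.2 (x - y)

/-- Convolving `b` with `a` amounts, in `L¹`, to multiplying `b` by `∫ a`, up to the first absolute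
moment of `a` times `‖b'‖₁`. It serves both when `a` is concentrated near `0` and when `b` is
spread out. -/
theorem integral_conv_sub_le (a b : 𝓢(ℝ, ℂ)) :
    ∫ x, ‖conv a b x - (∫ y, a y) * b x‖ ≤ (∫ y, ‖y‖ * ‖a y‖) * ∫ x, ‖deriv b x‖ := by
  have ha := a.integrable_pow_mul volume 1
  simp only [pow_one] at ha
  have hb : Integrable (deriv b) := (SchwartzMap.derivCLM ℝ ℂ b).integrable
  have h1 : ∀ x, ‖conv a b x - (∫ y, a y) * b x‖ₑ ≤ ∫⁻ y, ‖a y‖ₑ * ‖b (x - y) - b x‖ₑ := by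
    intro x
    rw [conv_apply, ← integral_mul_const, ← integral_sub (integrable_mul_translate a b x)
      (a.integrable.mul_const _)]
    refine (enorm_integral_le_lintegral_enorm _).trans_eq ?_
    simp [← mul_sub, enorm_mul]
  have h2 : ∫⁻ x, ‖conv a b x - (∫ y, a y) * b x‖ₑ ≤
      (∫⁻ y, ‖‖y‖ * ‖a y‖‖ₑ) * ∫⁻ x, ‖deriv b x‖ₑ := by
    calc _ ≤ ∫⁻ x, ∫⁻ y, ‖a y‖ₑ * ‖b (x - y) - b x‖ₑ := lintegral_mono h1
      _ = ∫⁻ y, ∫⁻ x, ‖a y‖ₑ * ‖b (x - y) - b x‖ₑ := by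
        refine lintegral_lintegral_swap (Measurable.aemeasurable ?_)
        have : Continuous fun p : ℝ × ℝ ↦ b (p.1 - p.2) - b p.1 := by fun_prop
        have h' : Continuous fun p : ℝ × ℝ ↦ a p.2 := by fun_prop
        exact h'.measurable.enorm.mul this.measurable.enorm
      _ ≤ ∫⁻ y, ‖‖y‖ * ‖a y‖‖ₑ * ∫⁻ x, ‖deriv b x‖ₑ := by
        refine lintegral_mono fun y ↦ ?_
        rw [lintegral_const_mul _ (by fun_prop)]
        refine (mul_le_mul_right (lintegral_translate_sub_le b y) _).trans_eq ?_
        rw [enorm_mul, enorm_norm, enorm_norm]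
        ring
      _ = _ := lintegral_mul_const _ (by fun_prop)
  rw [integral_norm_eq_lintegral_enorm (by fun_prop),
    integral_norm_eq_lintegral_enorm hb.1,
    show (∫ y, ‖y‖ * ‖a y‖) = ∫ y, ‖‖y‖ * ‖a y‖‖ by simp,
    integral_norm_eq_lintegral_enorm ha.1, ← ENNReal.toReal_mul]
  exact ENNReal.toReal_mono (ENNReal.mul_ne_top ha.2.ne hb.2.ne) h2

/-- The dilate `x ↦ t K(t x)`, normalised to preserve the integral of `K` for `t > 0`. -/
noncomputable def dil (t : ℝ) (ht : t ≠ 0) (K : 𝓢(ℝ, ℂ)) : 𝓢(ℝ, ℂ) :=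
  t • SchwartzMap.compCLMOfContinuousLinearEquiv ℝ
    (ContinuousLinearEquiv.unitsEquivAut ℝ (Units.mk0 t ht)) K

theorem dil_apply (t : ℝ) (ht : t ≠ 0) (K : 𝓢(ℝ, ℂ)) (x : ℝ) :
    dil t ht K x = t * K (t * x) := by
  simp [dil, mul_comm]

theorem integral_dil {t : ℝ} (ht : 0 < t) (K : 𝓢(ℝ, ℂ)) :
    ∫ x, dil t ht.ne' K x = ∫ x, K x := by
  simp_rw [dil_apply, integral_const_mul, Measure.integral_comp_mul_left K t, abs_inv,
    abs_of_pos ht]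
  simp [ht.ne']

theorem integral_norm_dil {t : ℝ} (ht : 0 < t) (K : 𝓢(ℝ, ℂ)) :
    ∫ x, ‖dil t ht.ne' K x‖ = ∫ x, ‖K x‖ := by
  simp_rw [dil_apply, norm_mul, integral_const_mul,
    Measure.integral_comp_mul_left (fun x ↦ ‖K x‖) t, abs_inv, abs_of_pos ht]
  simp [ht.ne', abs_of_pos ht]

theorem integral_mul_norm_dil {t : ℝ} (ht : 0 < t) (K : 𝓢(ℝ, ℂ)) :
    ∫ x, ‖x‖ * ‖dil t ht.ne' K x‖ = t⁻¹ * ∫ x, ‖x‖ * ‖K x‖ := by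
  have : ∀ x, ‖x‖ * ‖dil t ht.ne' K x‖ = ‖t * x‖ * ‖K (t * x)‖ := by
    intro x
    rw [dil_apply, norm_mul, norm_mul, Complex.norm_real]; ring
  simp_rw [this, Measure.integral_comp_mul_left (fun x ↦ ‖x‖ * ‖K x‖) t, abs_inv, abs_of_pos ht]
  simp

theorem integral_norm_deriv_dil {t : ℝ} (ht : 0 < t) (K : 𝓢(ℝ, ℂ)) :
    ∫ x, ‖deriv (dil t ht.ne' K) x‖ = t * ∫ x, ‖deriv K x‖ := by
  have : ∀ x, deriv (dil t ht.ne' K) x = t * (t * deriv K (t * x)) := by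
    intro x
    have h2 : HasDerivAt (fun s : ℝ ↦ t * s) t x := by
      simpa using (hasDerivAt_id x).const_mul t
    have h := ((K.hasDerivAt (t * x)).scomp x h2).const_mul (t : ℂ)
    have h3 : ⇑(dil t ht.ne' K) = fun x ↦ (t : ℂ) * K (t * x) := funext (dil_apply _ _ _)
    rw [h3]
    simpa using h.deriv
  simp_rw [this, norm_mul, integral_const_mul,
    Measure.integral_comp_mul_left (fun x ↦ ‖deriv K x‖) t, abs_inv, abs_of_pos ht]
  simp [ht.ne', abs_of_pos ht]

/-- Mathlib's `𝓕` uses the phase `e^{-2πiξx}`, whence the rescaling of the frequency. -/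
theorem FT_eq_fourier (a : 𝓢(ℝ, ℂ)) (ξ : ℝ) : FT a ξ = 𝓕 a ((2 * Real.pi)⁻¹ * ξ) := by
  rw [SchwartzMap.fourier_coe, Real.fourier_real_eq_integral_exp_smul, FT]
  refine integral_congr_ae (.of_forall fun x ↦ ?_)
  have : (Real.pi : ℂ) ≠ 0 := by exact_mod_cast Real.pi_ne_zero
  simp only [smul_eq_mul, mul_comm (a x)]
  congr 2
  push_cast
  field_simp

theorem FT_dil {t : ℝ} (ht : 0 < t) (K : 𝓢(ℝ, ℂ)) (ξ : ℝ) : FT (dil t ht.ne' K) ξ = FT K (t⁻¹ * ξ) := by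
  have : ∀ x : ℝ, dil t ht.ne' K x * Complex.exp (-Complex.I * ξ * x) =
      t * (fun x : ℝ ↦ K x * Complex.exp (-Complex.I * (t⁻¹ * ξ : ℝ) * x)) (t * x) := by
    intro x
    have : (t : ℂ) ≠ 0 := by exact_mod_cast ht.ne'
    simp only [dil_apply, mul_assoc]
    congr 4
    push_cast
    field_simp
  rw [FT, FT]
  rw [integral_congr_ae (.of_forall this), integral_const_mul,
    Measure.integral_comp_mul_left
      (fun x : ℝ ↦ K x * Complex.exp (-Complex.I * (t⁻¹ * ξ : ℝ) * x)) t, abs_inv, abs_of_pos ht]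
  simp [ht.ne']

theorem FT_conv (a b : 𝓢(ℝ, ℂ)) (ξ : ℝ) : FT (conv a b) ξ = FT a ξ * FT b ξ := by
  simp_rw [FT_eq_fourier, fourier_conv]

/-- A band-limited Schwartz kernel of integral `1`, the inverse Fourier transform of a bump
function. -/
theorem exists_kernel : ∃ K : 𝓢(ℝ, ℂ), HasCompactSupport (FT K) ∧
    (∀ ξ, |ξ| ≤ 1 → FT K ξ = 1) ∧ ∫ x, K x = 1 := by
  -- In the frequency variable of `𝓕` the plateau `|ξ| ≤ 1` is `[-1/(2π), 1/(2π)]`, which lies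
  -- inside the region where this bump equals `1`.
  let χ : ContDiffBump (0 : ℝ) := ⟨1, 2, one_pos, one_lt_two⟩
  have hc : HasCompactSupport (fun x : ℝ ↦ (χ x : ℂ)) :=
    χ.hasCompactSupport.comp_left (g := fun x : ℝ ↦ (x : ℂ)) (by simp)
  have hs : ContDiff ℝ (⊤ : ℕ∞) (fun x : ℝ ↦ (χ x : ℂ)) :=
    Complex.ofRealCLM.contDiff.comp χ.contDiff
  let K₀ : 𝓢(ℝ, ℂ) := 𝓕⁻ (hc.toSchwartzMap hs)
  have h2π : (0 : ℝ) < 2 * Real.pi := by positivity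
  have hFT : ∀ ξ, FT K₀ ξ = χ ((2 * Real.pi)⁻¹ * ξ) := by
    intro ξ
    rw [FT_eq_fourier]
    simp [K₀]
  have h1 : ∀ ξ, |ξ| ≤ 1 → FT K₀ ξ = 1 := by
    intro ξ hξ
    rw [hFT, χ.one_of_mem_closedBall]
    · simp
    · rw [mem_closedBall_zero_iff, norm_mul, Real.norm_eq_abs, Real.norm_eq_abs,
        abs_of_pos (inv_pos.2 h2π)]
      have : (2 * Real.pi)⁻¹ ≤ 1 := inv_le_one_of_one_le₀ (by linarith [Real.pi_gt_three])
      exact mul_le_one₀ this (abs_nonneg _) hξ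
  refine ⟨K₀, ?_, h1, ?_⟩
  · have : FT K₀ = (fun x : ℝ ↦ (χ x : ℂ)) ∘ (Homeomorph.mulLeft₀ (2 * Real.pi)⁻¹ (by positivity)) :=
      funext hFT
    rw [this]
    exact hc.comp_homeomorph _
  · simpa [FT] using h1 0 (by simp)

theorem exists_schwartz_near {f : ℝ → ℂ} (hf : Integrable f) {δ : ℝ} (hδ : 0 < δ) :
    ∃ h : 𝓢(ℝ, ℂ), ∫ x, ‖f x - h x‖ < δ := by
  obtain ⟨h, hh⟩ := (SchwartzMap.denseRange_toLpCLM (E := ℝ) (F := ℂ) (p := 1) (μ := volume)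
    ENNReal.one_ne_top).exists_dist_lt hf.toL1 hδ
  refine ⟨h, ?_⟩
  rw [SchwartzMap.toLpCLM_apply, L1.dist_eq_integral_dist] at hh
  convert hh using 1
  refine integral_congr_ae ?_
  filter_upwards [hf.coeFn_toL1, h.coeFn_toLp 1 volume] with x h1 h2
  rw [h1, h2, dist_eq_norm]

theorem H100_dense_in_L10 :
    ∀ f : ℝ → ℂ, Integrable f → (∫ x : ℝ, f x) = 0 →
      ∀ ε : ℝ, 0 < ε →
        ∃ g : ℝ → ℂ, Integrable g ∧
          ContDiff ℝ (⊤ : ℕ∞) (FT g) ∧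
          HasCompactSupport (FT g) ∧
          (0 : ℝ) ∉ tsupport (FT g) ∧
          (∫ x : ℝ, ‖f x - g x‖) < ε := by
  intro f hf hf0 ε hε
  obtain ⟨K, hKc, hK1, hKint⟩ := exists_kernel
  set M : ℝ := ∫ x, ‖K x‖ with hM
  have hM0 : 0 ≤ M := by positivity
  -- `δ` bounds both `‖f - h‖₁` and `|∫ h|`, which enter the total error as `δ + δ * M = ε / 4`.
  set δ : ℝ := ε / (4 * (M + 1)) with hδdef
  have hδ : 0 < δ := by positivity
  obtain ⟨h, hh⟩ := exists_schwartz_near hf hδ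
  have hδM : δ + δ * M = ε / 4 := by rw [hδdef]; field_simp; ring
  have hint : ‖∫ x, h x‖ ≤ δ := by
    calc ‖∫ x, h x‖ = ‖∫ x, (f x - h x)‖ := by
          rw [integral_sub hf h.integrable, hf0, zero_sub, norm_neg]
      _ ≤ ∫ x, ‖f x - h x‖ := norm_integral_le_integral_norm _
      _ ≤ δ := hh.le
  set A : ℝ := (∫ x, ‖x‖ * ‖K x‖) * ∫ x, ‖deriv h x‖ with hA
  set B : ℝ := (∫ x, ‖x‖ * ‖h x‖) * ∫ x, ‖deriv K x‖ with hB
  have hA0 : 0 ≤ A := by positivity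
  have hB0 : 0 ≤ B := by positivity
  -- The two convolution errors are `A / N` and `t * B`; both parameters make them `< ε / 4`.
  set N : ℝ := 4 * (A + 1) / ε with hN
  have hN0 : 0 < N := by positivity
  set t : ℝ := ε / (4 * (B + 1)) with ht
  have ht0 : 0 < t := by positivity
  have hE1 : ∫ x, ‖conv (dil N hN0.ne' K) h x - h x‖ < ε / 4 := by
    have := integral_conv_sub_le (dil N hN0.ne' K) h
    rw [integral_dil hN0, hKint, integral_mul_norm_dil hN0, mul_assoc, ← hA] at this
    simp only [one_mul] at this
    refine this.trans_lt ?_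
    rw [hN, inv_div, div_mul_eq_mul_div, div_lt_div_iff₀ (by positivity) (by positivity)]
    nlinarith
  have hE2 : ∫ x, ‖conv h (dil t ht0.ne' K) x - (∫ y, h y) * dil t ht0.ne' K x‖ < ε / 4 := by
    have := integral_conv_sub_le h (dil t ht0.ne' K)
    rw [integral_norm_deriv_dil ht0, mul_left_comm, ← hB] at this
    refine this.trans_lt ?_
    rw [ht, div_mul_eq_mul_div, div_lt_div_iff₀ (by positivity) (by positivity)]
    nlinarith
  set u := conv (dil N hN0.ne' K) h with hu
  set v := conv h (dil t ht0.ne' K) with hv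
  have hFT : ∀ ξ, FT (u - v : 𝓢(ℝ, ℂ)) ξ = FT h ξ * (FT K (N⁻¹ * ξ) - FT K (t⁻¹ * ξ)) := by
    intro ξ
    have : FT (u - v : 𝓢(ℝ, ℂ)) ξ = FT u ξ - FT v ξ := by
      simp only [FT_eq_fourier]
      rw [← FourierTransform.fourierCLM_apply (R := ℂ), map_sub]
      rfl
    rw [this, hu, hv, FT_conv, FT_conv, FT_dil hN0, FT_dil ht0]
    ring
  have hKdil : ∀ s : ℝ, 0 < s → HasCompactSupport fun ξ ↦ FT K (s⁻¹ * ξ) := fun s hs ↦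
    hKc.comp_homeomorph (Homeomorph.mulLeft₀ s⁻¹ (inv_ne_zero hs.ne'))
  refine ⟨(u - v : 𝓢(ℝ, ℂ)), SchwartzMap.integrable _, ?_, ?_, ?_, ?_⟩
  · have : FT (u - v : 𝓢(ℝ, ℂ)) = fun ξ ↦ 𝓕 (u - v) ((2 * Real.pi)⁻¹ * ξ) :=
      funext (FT_eq_fourier _)
    rw [this]
    exact ((𝓕 (u - v)).smooth ⊤).comp (contDiff_const.mul contDiff_id)
  · rw [funext hFT]
    exact ((hKdil N hN0).sub (hKdil t ht0)).mul_left
  · rw [notMem_tsupport_iff_eventuallyEq]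
    have hnear : ∀ s : ℝ, 0 < s → ∀ᶠ ξ in nhds (0 : ℝ), FT K (s⁻¹ * ξ) = 1 := by
      intro s hs
      filter_upwards [Metric.closedBall_mem_nhds (0 : ℝ) hs] with ξ hξ
      apply hK1
      rw [mem_closedBall_zero_iff, Real.norm_eq_abs] at hξ
      rw [abs_mul, abs_of_pos (inv_pos.2 hs), inv_mul_le_one₀ hs]
      exact hξ
    filter_upwards [hnear N hN0, hnear t ht0] with ξ h1 h2
    rw [hFT, h1, h2]
    simp
  · have i1 : Integrable fun x ↦ ‖f x - h x‖ := (hf.sub h.integrable).norm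
    have i2 : Integrable fun x ↦ ‖u x - h x‖ := (u.integrable.sub h.integrable).norm
    have i4 : Integrable fun x ↦ ‖(∫ y, h y) * dil t ht0.ne' K x‖ :=
      ((dil t ht0.ne' K).integrable.const_mul _).norm
    have i3 : Integrable fun x ↦ ‖v x - (∫ y, h y) * dil t ht0.ne' K x‖ :=
      (v.integrable.sub ((dil t ht0.ne' K).integrable.const_mul _)).norm
    have hE3 : ∫ x, ‖(∫ y, h y) * dil t ht0.ne' K x‖ ≤ δ * M := by
      simp_rw [norm_mul]
      rw [integral_const_mul, integral_norm_dil ht0]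
      gcongr
    calc ∫ x, ‖f x - (u - v : 𝓢(ℝ, ℂ)) x‖
        ≤ ∫ x, (‖f x - h x‖ + ‖u x - h x‖ + ‖v x - (∫ y, h y) * dil t ht0.ne' K x‖
            + ‖(∫ y, h y) * dil t ht0.ne' K x‖) := by
          refine integral_mono (hf.sub (u - v).integrable).norm (((i1.add i2).add i3).add i4) ?_
          intro x
          have : f x - (u - v : 𝓢(ℝ, ℂ)) x = (f x - h x) - (u x - h x)
              + (v x - (∫ y, h y) * dil t ht0.ne' K x) + (∫ y, h y) * dil t ht0.ne' K x := by
            rw [sub_apply]; ring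
          simp only [this]
          refine (norm_add_le _ _).trans (add_le_add_left ((norm_add_le _ _).trans
            (add_le_add_left (norm_sub_le _ _) _)) _)
      _ = (∫ x, ‖f x - h x‖) + (∫ x, ‖u x - h x‖)
            + (∫ x, ‖v x - (∫ y, h y) * dil t ht0.ne' K x‖)
            + ∫ x, ‖(∫ y, h y) * dil t ht0.ne' K x‖ := by
          rw [integral_add (by fun_prop) i4, integral_add (by fun_prop) i3,
            integral_add i1 i2]
      _ < ε := by linarith
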